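/- For every k ≥ 2, the interval [k, k+2] = {k, k+1, k+2} occurs as the length set of some element of P_{fin,0}(ℕ₀). -/

import Mathlib

open Pointwise

/-- `X` is an atom (indecomposable element) of the monoid `P_{fin,0}(ℕ)` of finite
subsets of ℕ containing 0 under sumset addition. -/
def IsAtomP (X : Finset ℕ) : Prop :=
  0 ∈ X ∧ X ≠ {0} ∧
    ∀ A B : Finset ℕ, 0 ∈ A → 0 ∈ B → X = A + B → A = {0} ∨ B = {0}

/-- The length set of `X` in `P_{fin,0}(ℕ)`: the set of `n` such that `X` is a sum
of `n` atoms. -/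
def LengthSet (X : Finset ℕ) : Set ℕ :=
  {n | ∃ l : Multiset (Finset ℕ), Multiset.card l = n ∧ (∀ U ∈ l, IsAtomP U) ∧ l.sum = X}

/-- `X` is relatively cancellative in `P_{fin,0}(ℕ)`. -/
def RelCancel (X : Finset ℕ) : Prop :=
  ∀ B C D : Finset ℕ, 0 ∈ B → 0 ∈ C → 0 ∈ D → X = B + C → X = B + D → C = D

/-- `C` and `D` are relatively prime in `P_{fin,0}(ℕ)`: their only common divisor is `{0}`. -/
def RelPrime (C D : Finset ℕ) : Prop :=
  ∀ T : Finset ℕ, 0 ∈ T → (∃ C' : Finset ℕ, 0 ∈ C' ∧ C = T + C') →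
    (∃ D' : Finset ℕ, 0 ∈ D' ∧ D = T + D') → T = {0}

/-- The finite set of positions of the binary digits `1` of `m`. -/
def bitSet (m : ℕ) : Finset ℕ := m.bitIndices.toFinset

@[simp] theorem mem_bitSet {m i : ℕ} : i ∈ bitSet m ↔ m.testBit i = true :=
  List.mem_toFinset.trans Nat.mem_bitIndices

theorem bitSet_injective : Function.Injective bitSet := by
  intro a b h
  refine Nat.eq_of_testBit_eq fun i => ?_
  rw [Bool.eq_iff_iff, ← mem_bitSet, ← mem_bitSet, h]

theorem zero_mem_bitSet {m : ℕ} : 0 ∈ bitSet m ↔ m % 2 = 1 := by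
  rw [mem_bitSet, Nat.testBit_zero]
  simp

@[simp] theorem bitSet_one : bitSet 1 = ({0} : Finset ℕ) := by simp [bitSet]

theorem bitSet_or (a b : ℕ) : bitSet (a ||| b) = bitSet a ∪ bitSet b := by
  ext i
  simp only [mem_bitSet, Nat.testBit_or, Bool.or_eq_true, Finset.mem_union]

theorem bitSet_or_one_shiftLeft (a j : ℕ) : bitSet (a ||| 1 <<< j) = insert j (bitSet a) := by
  ext i
  simp [Nat.one_shiftLeft, Nat.testBit_two_pow, or_comm, eq_comm (a := j)]

theorem bitSet_shiftLeft (a j : ℕ) : bitSet (a <<< j) = {j} + bitSet a := by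
  ext i
  simp only [mem_bitSet, Nat.testBit_shiftLeft, Finset.singleton_add, Finset.mem_vadd_finset,
    vadd_eq_add, Bool.and_eq_true, decide_eq_true_eq]
  constructor
  · rintro ⟨h, h'⟩
    exact ⟨i - j, h', by omega⟩
  · rintro ⟨y, hy, rfl⟩
    exact ⟨by omega, by simpa using hy⟩

theorem bitSet_or_shiftLeft_eq_add {b c s j : ℕ} (h : bitSet s = bitSet b + bitSet c) :
    bitSet (s ||| c <<< j) = bitSet (b ||| 1 <<< j) + bitSet c := by
  rw [bitSet_or, h, bitSet_shiftLeft, bitSet_or_one_shiftLeft, Finset.insert_eq,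
    Finset.union_add, Finset.union_comm]

/-- The binary encoding of the set of members of a list. -/
def listMask (l : List ℕ) : ℕ := l.foldr (fun i m => m ||| 1 <<< i) 0

theorem bitSet_listMask (l : List ℕ) : bitSet (listMask l) = l.toFinset := by
  induction l with
  | nil => simp [listMask, bitSet]
  | cons i l ih =>
    rw [List.toFinset_cons, ← ih]
    exact bitSet_or_one_shiftLeft _ _

/-- The binary encoding of the sumset of `bitSet m` and the set of members of `l`. -/
def sumMask (m : ℕ) (l : List ℕ) : ℕ := l.foldr (fun i s => s ||| m <<< i) 0

theorem bitSet_sumMask (m : ℕ) (l : List ℕ) :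
    bitSet (sumMask m l) = bitSet m + bitSet (listMask l) := by
  induction l with
  | nil => simp [sumMask, listMask, bitSet]
  | cons i l ih =>
    have h : bitSet (sumMask m (i :: l)) = bitSet (sumMask m l ||| m <<< i) := rfl
    rw [h, bitSet_or, bitSet_listMask, List.toFinset_cons, ← bitSet_listMask, ih,
      bitSet_shiftLeft, Finset.insert_eq, Finset.add_union, Finset.union_comm,
      add_comm (bitSet m) {i}]

/-- Inclusion of `bitSet a` in `bitSet b`, as a computation on binary encodings. -/
def isSubmask (a b : ℕ) : Bool := Nat.beq (Nat.land a b) a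

theorem isSubmask_of_subset {a b : ℕ} (h : bitSet a ⊆ bitSet b) : isSubmask a b = true := by
  rw [isSubmask, Nat.beq_eq]
  refine bitSet_injective ?_
  ext i
  have := @h i
  simp only [mem_bitSet] at this ⊢
  change (a &&& b).testBit i = true ↔ _
  simpa using this

/-- Application of `f` to `n`, arranged so that reduction computes `n` before unfolding `f`. -/
def strictApply {α : Type*} (n : ℕ) (f : ℕ → α) : α :=
  Nat.rec (f 0) (fun m _ => f (Nat.succ m)) n

theorem strictApply_eq {α : Type*} (n : ℕ) (f : ℕ → α) : strictApply n f = f n := by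
  cases n <;> rfl

/-- An injective encoding of natural numbers for which the low 64 bits of the code of a large
number depend on all its digits. The kernel hashes numerals by these bits. -/
def pack (n : ℕ) : ℕ := Nat.add (Nat.mul n 18446744073709551616) (Nat.mod n 2305843009213693951)

/-- The inverse of `pack`. -/
def unpack (n : ℕ) : ℕ := Nat.div n 18446744073709551616

@[simp] theorem unpack_pack (n : ℕ) : unpack (pack n) = n := by
  change (n * 18446744073709551616 + n % 2305843009213693951) / 18446744073709551616 = n
  omega

/-- Backtracking search through the pairs of sets with sumset `bitSet A` whose second member lies
between `bitSet lo` and `bitSet hi`. The list contains the elements of `bitSet A` still to be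
distributed, the arguments `b` and `c` (under `pack`) encode the parts of the two sets decided so
far, and `s` encodes their sumset. The result tells whether every pair reached satisfies `leaf`. -/
def search (A lo hi : ℕ) (leaf : ℕ → ℕ → Bool) (js : List ℕ) : ℕ → ℕ → ℕ → Bool :=
  List.rec (fun b c _ => leaf (unpack b) (unpack c))
    (fun j _ next b c s =>
      strictApply (Nat.shiftLeft 1 j) fun e =>
      strictApply (pack (Nat.lor (unpack s) (Nat.shiftLeft (unpack c) j))) fun sb =>
      strictApply (pack (Nat.lor (unpack s) (Nat.shiftLeft (unpack b) j))) fun sc =>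
      strictApply (pack (Nat.lor (unpack b) e)) fun b' =>
      strictApply (pack (Nat.lor (unpack c) e)) fun c' =>
      strictApply (pack (Nat.lor (unpack sb) (Nat.shiftLeft (unpack b') j))) fun sbc =>
      (isSubmask e lo || !isSubmask e (unpack s) || next b c s) &&
      ((isSubmask e lo || !isSubmask (unpack sb) A || next b' c sb) &&
      ((!isSubmask e hi || !isSubmask (unpack sc) A || next b c' sc) &&
      (!isSubmask e hi || !isSubmask (unpack sbc) A || next b' c' sbc))))
    js

theorem search_nil (A lo hi : ℕ) (leaf : ℕ → ℕ → Bool) (b c s : ℕ) :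
    search A lo hi leaf [] (pack b) (pack c) s = leaf b c := by
  simp [search]

theorem search_cons (A lo hi : ℕ) (leaf : ℕ → ℕ → Bool) (j : ℕ) (js : List ℕ) (b c s : ℕ) :
    search A lo hi leaf (j :: js) (pack b) (pack c) (pack s) =
      ((isSubmask (1 <<< j) lo || !isSubmask (1 <<< j) s ||
        search A lo hi leaf js (pack b) (pack c) (pack s)) &&
      ((isSubmask (1 <<< j) lo || !isSubmask (s ||| c <<< j) A ||
        search A lo hi leaf js (pack (b ||| 1 <<< j)) (pack c) (pack (s ||| c <<< j))) &&
      ((!isSubmask (1 <<< j) hi || !isSubmask (s ||| b <<< j) A ||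
        search A lo hi leaf js (pack b) (pack (c ||| 1 <<< j)) (pack (s ||| b <<< j))) &&
      (!isSubmask (1 <<< j) hi || !isSubmask ((s ||| c <<< j) ||| (b ||| 1 <<< j) <<< j) A ||
        search A lo hi leaf js (pack (b ||| 1 <<< j)) (pack (c ||| 1 <<< j))
          (pack ((s ||| c <<< j) ||| (b ||| 1 <<< j) <<< j)))))) := by
  simp only [search, strictApply_eq, unpack_pack]
  rfl

theorem isSubmask_one_shiftLeft {j m : ℕ} : isSubmask (1 <<< j) m = true ↔ j ∈ bitSet m := by
  have hj : ∀ i, i ∈ bitSet (1 <<< j) ↔ i = j := by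
    intro i
    simp [Nat.one_shiftLeft, Nat.testBit_two_pow, eq_comm]
  constructor
  · intro h
    rw [isSubmask, Nat.beq_eq] at h
    have : j ∈ bitSet (1 <<< j &&& m) := by
      change j ∈ bitSet (Nat.land (1 <<< j) m)
      rw [h, hj]
    simp only [mem_bitSet, Nat.testBit_and, Bool.and_eq_true] at this ⊢
    exact this.2
  · intro h
    refine isSubmask_of_subset fun i hi => ?_
    rwa [(hj i).1 hi]

theorem filter_notMem_cons_of_mem {B : Finset ℕ} {j : ℕ} {js : List ℕ} (hj : j ∈ B)
    (hjs : j ∉ js) :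
    B.filter (· ∉ js) = insert j (B.filter (· ∉ j :: js)) := by
  ext i
  by_cases h : i = j <;> simp_all

theorem filter_notMem_cons_of_notMem {B : Finset ℕ} {j : ℕ} {js : List ℕ} (hj : j ∉ B) :
    B.filter (· ∉ js) = B.filter (· ∉ j :: js) := by
  ext i
  by_cases h : i = j <;> simp_all

theorem exists_leaf_of_search {A lo hi : ℕ} {leaf : ℕ → ℕ → Bool} {B C : Finset ℕ}
    (hBC : B + C = bitSet A) (hlo : bitSet lo ⊆ C) (hhi : C ⊆ bitSet hi) :
    ∀ (js : List ℕ) (b c s : ℕ), search A lo hi leaf js (pack b) (pack c) (pack s) = true →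
      js.Pairwise (· < ·) → (∀ j ∈ js, j ∈ bitSet A) →
      bitSet b = B.filter (· ∉ js) → bitSet c = C.filter (· ∉ js) →
      bitSet s = bitSet b + bitSet c →
      ∃ b c, bitSet b = B ∧ bitSet c = C ∧ leaf b c = true := by
  intro js
  induction js with
  | nil =>
    intro b c s h _ _ hb hc _
    exact ⟨b, c, by simpa using hb, by simpa using hc, by rwa [search_nil] at h⟩
  | cons j js ih =>
    intro b c s h hsort hmem hb hc hs
    obtain ⟨hjs, hsort'⟩ := List.pairwise_cons.1 hsort
    have hj : j ∉ js := fun h => lt_irrefl _ (hjs j h)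
    have hmem' : ∀ i ∈ js, i ∈ bitSet A := fun i hi => hmem i (List.mem_cons_of_mem _ hi)
    have key : ∀ {b' c' s' : ℕ}, bitSet s' = bitSet b' + bitSet c' →
        bitSet b' = B.filter (· ∉ js) → bitSet c' = C.filter (· ∉ js) →
        isSubmask s' A = true := by
      intro b' c' s' hs' hb' hc'
      refine isSubmask_of_subset ?_
      rw [hs', hb', hc', ← hBC]
      exact Finset.add_subset_add (Finset.filter_subset _ _) (Finset.filter_subset _ _)
    simp only [search_cons, Bool.and_eq_true, Bool.or_eq_true, Bool.not_eq_true',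
      isSubmask_one_shiftLeft] at h
    obtain ⟨h₁, h₂, h₃, h₄⟩ := h
    have hsb := bitSet_or_shiftLeft_eq_add (j := j) hs
    have hsc : bitSet (s ||| b <<< j) = bitSet b + bitSet (c ||| 1 <<< j) := by
      rw [add_comm]
      exact bitSet_or_shiftLeft_eq_add (by rw [hs, add_comm])
    have hsbc : bitSet ((s ||| c <<< j) ||| (b ||| 1 <<< j) <<< j) =
        bitSet (b ||| 1 <<< j) + bitSet (c ||| 1 <<< j) := by
      rw [add_comm]
      exact bitSet_or_shiftLeft_eq_add (by rw [hsb, add_comm])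
    by_cases hjB : j ∈ B <;> by_cases hjC : j ∈ C
    · have hb' : bitSet (b ||| 1 <<< j) = B.filter (· ∉ js) := by
        rw [bitSet_or_one_shiftLeft, hb, filter_notMem_cons_of_mem hjB hj]
      have hc' : bitSet (c ||| 1 <<< j) = C.filter (· ∉ js) := by
        rw [bitSet_or_one_shiftLeft, hc, filter_notMem_cons_of_mem hjC hj]
      refine ih _ _ _ ?_ hsort' hmem' hb' hc' hsbc
      have hjhi : isSubmask (1 <<< j) hi = true := isSubmask_one_shiftLeft.2 (hhi hjC)
      simpa [hjhi, key hsbc hb' hc'] using h₄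
    · have hb' : bitSet (b ||| 1 <<< j) = B.filter (· ∉ js) := by
        rw [bitSet_or_one_shiftLeft, hb, filter_notMem_cons_of_mem hjB hj]
      have hc' : bitSet c = C.filter (· ∉ js) := by
        rw [hc, ← filter_notMem_cons_of_notMem hjC]
      refine ih _ _ _ ?_ hsort' hmem' hb' hc' hsb
      have hjlo : j ∉ bitSet lo := fun h => hjC (hlo h)
      simpa only [hjlo, key hsb hb' hc', false_or, Bool.true_eq_false] using h₂
    · have hb' : bitSet b = B.filter (· ∉ js) := by
        rw [hb, ← filter_notMem_cons_of_notMem hjB]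
      have hc' : bitSet (c ||| 1 <<< j) = C.filter (· ∉ js) := by
        rw [bitSet_or_one_shiftLeft, hc, filter_notMem_cons_of_mem hjC hj]
      refine ih _ _ _ ?_ hsort' hmem' hb' hc' hsc
      have hjhi : isSubmask (1 <<< j) hi = true := isSubmask_one_shiftLeft.2 (hhi hjC)
      simpa [hjhi, key hsc hb' hc'] using h₃
    · have hb' : bitSet b = B.filter (· ∉ js) := by
        rw [hb, ← filter_notMem_cons_of_notMem hjB]
      have hc' : bitSet c = C.filter (· ∉ js) := by
        rw [hc, ← filter_notMem_cons_of_notMem hjC]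
      refine ih _ _ _ ?_ hsort' hmem' hb' hc' hs
      have hjlo : j ∉ bitSet lo := fun h => hjC (hlo h)
      have hj_mem : j ∈ bitSet s := by
        have hjA := hmem j List.mem_cons_self
        rw [← hBC, Finset.mem_add] at hjA
        obtain ⟨x, hx, y, hy, hxy⟩ := hjA
        rw [hs, hb', hc', Finset.mem_add]
        refine ⟨x, Finset.mem_filter.2 ⟨hx, fun h => ?_⟩, y,
          Finset.mem_filter.2 ⟨hy, fun h => ?_⟩, hxy⟩
        · have := hjs x h; omega
        · have := hjs y h; omega
      have hjs_mem : isSubmask (1 <<< j) s = true := isSubmask_one_shiftLeft.2 hj_mem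
      simpa only [hjlo, hjs_mem, false_or, Bool.true_eq_false] using h₁

theorem exists_leaf_of_search_listMask {lo hi : ℕ} {leaf : ℕ → ℕ → Bool} {B C : Finset ℕ}
    {js : List ℕ} (hjs : (0 :: js).Pairwise (· < ·))
    (hsearch : search (listMask (0 :: js)) lo hi leaf js (pack 1) (pack 1) (pack 1) = true)
    (hB : 0 ∈ B) (hC : 0 ∈ C) (hBC : B + C = bitSet (listMask (0 :: js)))
    (hlo : bitSet lo ⊆ C) (hhi : C ⊆ bitSet hi) :
    ∃ b c, bitSet b = B ∧ bitSet c = C ∧ leaf b c = true := by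
  obtain ⟨hpos, hsort⟩ := List.pairwise_cons.1 hjs
  have h0 : 0 ∉ js := fun h => lt_irrefl _ (hpos 0 h)
  have hmem : ∀ {i}, i ∈ B + C ↔ i = 0 ∨ i ∈ js := by
    intro i
    rw [hBC, bitSet_listMask]; simp
  refine exists_leaf_of_search hBC hlo hhi js 1 1 1 hsearch hsort ?_ ?_ ?_ (by simp)
  · intro j hj
    rw [← hBC]
    exact hmem.2 (Or.inr hj)
  · ext i
    simp only [bitSet_one, Finset.mem_singleton, Finset.mem_filter]
    constructor
    · rintro rfl
      exact ⟨hB, h0⟩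
    · rintro ⟨hi, hi'⟩
      have : i ∈ B + C := by simpa using Finset.add_mem_add hi hC
      exact (hmem.1 this).resolve_right hi'
  · ext i
    simp only [bitSet_one, Finset.mem_singleton, Finset.mem_filter]
    constructor
    · rintro rfl
      exact ⟨hC, h0⟩
    · rintro ⟨hi, hi'⟩
      have : i ∈ B + C := by simpa using Finset.add_mem_add hB hi
      exact (hmem.1 this).resolve_right hi'

theorem singleton_zero_add_finset (B : Finset ℕ) : {0} + B = B := by
  rw [Finset.singleton_zero, zero_add]

/-- The union of `A₀` and the translate of `A₁` by `N`. -/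
def layered (N : ℕ) (A₀ A₁ : Finset ℕ) : Finset ℕ := A₀ ∪ ({N} + A₁)

theorem mem_layered {N x : ℕ} {A₀ A₁ : Finset ℕ} :
    x ∈ layered N A₀ A₁ ↔ x ∈ A₀ ∨ ∃ a ∈ A₁, N + a = x := by
  simp [layered, Finset.singleton_add, Finset.mem_vadd_finset]

theorem zero_mem_layered {N : ℕ} {A₀ A₁ : Finset ℕ} (h : 0 ∈ A₀) : 0 ∈ layered N A₀ A₁ :=
  mem_layered.2 (Or.inl h)

theorem self_mem_layered {N : ℕ} {A₀ A₁ : Finset ℕ} (h : 0 ∈ A₁) : N ∈ layered N A₀ A₁ :=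
  mem_layered.2 (Or.inr ⟨0, h, rfl⟩)

theorem layered_add (N : ℕ) (B₀ B₁ C : Finset ℕ) :
    layered N B₀ B₁ + C = layered N (B₀ + C) (B₁ + C) := by
  simp only [layered, Finset.union_add, add_assoc]

theorem layered_self (N : ℕ) (B : Finset ℕ) : layered N B B = layered N {0} {0} + B := by
  rw [layered_add, singleton_zero_add_finset]

theorem layered_injective {N n : ℕ} {A₀ A₁ B₀ B₁ : Finset ℕ} (hN : n < N)
    (hA₀ : ∀ x ∈ A₀, x ≤ n) (hB₀ : ∀ x ∈ B₀, x ≤ n)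
    (h : layered N A₀ A₁ = layered N B₀ B₁) : A₀ = B₀ ∧ A₁ = B₁ := by
  have key : ∀ x, (x ∈ A₀ ∨ ∃ a ∈ A₁, N + a = x) ↔ (x ∈ B₀ ∨ ∃ a ∈ B₁, N + a = x) := fun x => by
    rw [← mem_layered, h, mem_layered]
  constructor <;> ext x
  · constructor
    · intro hx
      have := hA₀ x hx
      exact ((key x).1 (Or.inl hx)).resolve_right fun ⟨a, _, ha⟩ => by omega
    · intro hx
      have := hB₀ x hx
      exact ((key x).2 (Or.inl hx)).resolve_right fun ⟨a, _, ha⟩ => by omega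
  · constructor
    · intro hx
      rcases (key (N + x)).1 (Or.inr ⟨x, hx, rfl⟩) with h' | ⟨a, ha, h'⟩
      · have := hB₀ _ h'; omega
      · rwa [← Nat.add_left_cancel h']
    · intro hx
      rcases (key (N + x)).2 (Or.inr ⟨x, hx, rfl⟩) with h' | ⟨a, ha, h'⟩
      · have := hA₀ _ h'; omega
      · rwa [← Nat.add_left_cancel h']

theorem le_of_add_eq {n : ℕ} {A B C : Finset ℕ} (hA : ∀ x ∈ A, x ≤ n) (hC : 0 ∈ C)
    (h : B + C = A) : ∀ x ∈ B, x ≤ n := by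
  intro x hx
  exact hA x (h ▸ Finset.mem_add.2 ⟨x, hx, 0, hC, rfl⟩)

theorem zero_mem_of_zero_mem_add {B C : Finset ℕ} (h : 0 ∈ B + C) : 0 ∈ B := by
  obtain ⟨b, hb, c, -, hbc⟩ := Finset.mem_add.1 h
  rwa [← (Nat.add_eq_zero_iff.1 hbc).1]

/-- In a decomposition of a layered set with distant layers into two sets, a summand that contains
the translation vector is layered. -/
theorem exists_layered_of_mem {N n : ℕ} {A₀ A₁ B C : Finset ℕ} (hN : 2 * n < N)
    (hA₀ : ∀ x ∈ A₀, x ≤ n) (hA₁ : ∀ x ∈ A₁, x ≤ n) (hB : 0 ∈ B) (hC : 0 ∈ C)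
    (h : B + C = layered N A₀ A₁) (hNB : N ∈ B) :
    (∀ x ∈ C, x ≤ n) ∧ ∃ B₀ B₁, 0 ∈ B₀ ∧ 0 ∈ B₁ ∧ B = layered N B₀ B₁ ∧
      B₀ + C = A₀ ∧ B₁ + C = A₁ := by
  have key : ∀ b ∈ B, ∀ c ∈ C, b + c ∈ A₀ ∨ ∃ a ∈ A₁, N + a = b + c := fun b hb c hc => by
    rw [← mem_layered, ← h]
    exact Finset.add_mem_add hb hc
  have hBmem : ∀ b ∈ B, b ≤ n ∨ N ≤ b := fun b hb => by
    rcases key b hb 0 hC with h' | ⟨a, ha, h'⟩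
    · exact Or.inl (hA₀ _ h')
    · right; omega
  have hCle : ∀ c ∈ C, c ≤ n := fun c hc => by
    rcases key N hNB c hc with h' | ⟨a, ha, h'⟩
    · have := hA₀ _ h'; omega
    · have := hA₁ _ ha; omega
  refine ⟨hCle, B.filter (· ≤ n), (B.filter (N ≤ ·)).image (· - N), ?_, ?_, ?_, ?_, ?_⟩
  · simpa using hB
  · simpa using ⟨N, ⟨hNB, le_rfl⟩, Nat.sub_self N⟩
  · ext x
    simp only [mem_layered, Finset.mem_filter, Finset.mem_image]
    constructor
    · intro hx
      rcases hBmem x hx with h' | h'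
      · exact Or.inl ⟨hx, h'⟩
      · exact Or.inr ⟨x - N, ⟨x, ⟨hx, h'⟩, rfl⟩, by omega⟩
    · rintro (⟨hx, -⟩ | ⟨a, ⟨y, ⟨hy, hy'⟩, rfl⟩, rfl⟩)
      · exact hx
      · rwa [Nat.add_sub_cancel' hy']
  · ext x
    simp only [Finset.mem_add, Finset.mem_filter]
    constructor
    · rintro ⟨b, ⟨hb, hb'⟩, c, hc, rfl⟩
      refine (key b hb c hc).resolve_right fun ⟨a, _, ha⟩ => ?_
      have := hCle c hc
      omega
    · intro hx
      obtain ⟨b, hb, c, hc, hbc⟩ := Finset.mem_add.1 (h ▸ mem_layered.2 (Or.inl hx))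
      have := hA₀ x hx
      exact ⟨b, ⟨hb, by omega⟩, c, hc, hbc⟩
  · ext x
    simp only [Finset.mem_add, Finset.mem_filter, Finset.mem_image]
    constructor
    · rintro ⟨_, ⟨b, ⟨hb, hb'⟩, rfl⟩, c, hc, rfl⟩
      rcases key b hb c hc with h' | ⟨a, ha, h'⟩
      · have := hA₀ _ h'; omega
      · rwa [show b - N + c = a by omega]
    · intro hx
      obtain ⟨b, hb, c, hc, hbc⟩ := Finset.mem_add.1 (h ▸ mem_layered.2 (Or.inr ⟨x, hx, rfl⟩))
      have := hCle c hc
      have hNb : N ≤ b := (hBmem b hb).resolve_left fun h' => by omega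
      exact ⟨b - N, ⟨b, ⟨hb, hNb⟩, rfl⟩, c, hc, by omega⟩

theorem mem_or_mem_of_add_eq_layered {N n : ℕ} {A₀ A₁ B C : Finset ℕ} (hN : 2 * n < N)
    (hA₀ : ∀ x ∈ A₀, x ≤ n) (hA₁ : 0 ∈ A₁) (hB : 0 ∈ B) (hC : 0 ∈ C)
    (h : B + C = layered N A₀ A₁) : N ∈ B ∨ N ∈ C := by
  obtain ⟨b, hb, c, hc, hbc⟩ := Finset.mem_add.1 (h ▸ self_mem_layered hA₁)
  have key : ∀ x ∈ B + C, x ≤ n ∨ N ≤ x := fun x hx => by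
    rcases mem_layered.1 (h ▸ hx) with h' | ⟨a, ha, h'⟩
    · exact Or.inl (hA₀ _ h')
    · right; omega
  have hb' := key b (by simpa using Finset.add_mem_add hb hC)
  have hc' := key c (by simpa using Finset.add_mem_add hB hc)
  by_cases hNb : N ≤ b
  · left; rwa [show N = b by omega]
  · right; rwa [show N = c by omega]

theorem isAtomP_layered_iff {N n : ℕ} {A₀ A₁ : Finset ℕ} (hN : 2 * n < N)
    (hA₀ : ∀ x ∈ A₀, x ≤ n) (hA₁ : ∀ x ∈ A₁, x ≤ n) (h₀ : 0 ∈ A₀) (h₁ : 0 ∈ A₁) :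
    IsAtomP (layered N A₀ A₁) ↔ ∀ B₀ B₁ C : Finset ℕ, 0 ∈ B₀ → 0 ∈ B₁ → 0 ∈ C →
      B₀ + C = A₀ → B₁ + C = A₁ → C = {0} := by
  have hne : ∀ {B₀ B₁ : Finset ℕ}, 0 ∈ B₁ → layered N B₀ B₁ ≠ {0} := fun {B₀ B₁} h h' => by
    have := self_mem_layered (N := N) (A₀ := B₀) h
    rw [h', Finset.mem_singleton] at this
    omega
  constructor
  · rintro ⟨-, -, hatom⟩ B₀ B₁ C hB₀ hB₁ hC rfl rfl
    exact (hatom _ _ (zero_mem_layered hB₀) hC (layered_add _ _ _ _).symm).resolve_left (hne hB₁)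
  · intro H
    refine ⟨zero_mem_layered h₀, hne h₁, fun B C hB hC h => ?_⟩
    rcases mem_or_mem_of_add_eq_layered hN hA₀ h₁ hB hC h.symm with hNB | hNC
    · obtain ⟨-, B₀, B₁, hB₀, hB₁, -, e₀, e₁⟩ := exists_layered_of_mem hN hA₀ hA₁ hB hC h.symm hNB
      exact Or.inr (H B₀ B₁ C hB₀ hB₁ hC e₀ e₁)
    · obtain ⟨-, C₀, C₁, hC₀, hC₁, -, e₀, e₁⟩ :=
        exists_layered_of_mem hN hA₀ hA₁ hC hB (by rw [add_comm, h]) hNC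
      exact Or.inl (H C₀ C₁ B hC₀ hC₁ hB e₀ e₁)

theorem relCancel_layered {N n : ℕ} {A₀ A₁ : Finset ℕ} (hN : 2 * n < N)
    (hA₀ : ∀ x ∈ A₀, x ≤ n) (hA₁ : ∀ x ∈ A₁, x ≤ n) (h₁ : 0 ∈ A₁)
    (hcompl : ∀ B₀ B₁ B₀' B₁' C : Finset ℕ, 0 ∈ B₀ → 0 ∈ B₁ → 0 ∈ B₀' → 0 ∈ B₁' → 0 ∈ C →
      B₀ + C = A₀ → B₁ + C = A₁ → B₀' + C = A₀ → B₁' + C = A₁ → B₀ = B₀' ∧ B₁ = B₁')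
    (hdiv : ∀ B₀ B₁ C D : Finset ℕ, 0 ∈ B₀ → 0 ∈ B₁ → 0 ∈ C → 0 ∈ D →
      B₀ + C = A₀ → B₁ + C = A₁ → B₀ + D = A₀ → B₁ + D = A₁ → C = D) :
    RelCancel (layered N A₀ A₁) := by
  intro B C D hB hC hD hBC hBD
  by_cases hNB : N ∈ B
  · obtain ⟨-, B₀, B₁, hB₀, hB₁, hBe, e₀, e₁⟩ :=
      exists_layered_of_mem hN hA₀ hA₁ hB hC hBC.symm hNB
    obtain ⟨-, B₀', B₁', hB₀', hB₁', hBe', e₀', e₁'⟩ :=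
      exists_layered_of_mem hN hA₀ hA₁ hB hD hBD.symm hNB
    obtain ⟨rfl, rfl⟩ := layered_injective (by omega) (le_of_add_eq hA₀ hC e₀)
      (le_of_add_eq hA₀ hD e₀') (hBe ▸ hBe')
    exact hdiv B₀ B₁ C D hB₀ hB₁ hC hD e₀ e₁ e₀' e₁'
  · have hNC := (mem_or_mem_of_add_eq_layered hN hA₀ h₁ hB hC hBC.symm).resolve_left hNB
    have hND := (mem_or_mem_of_add_eq_layered hN hA₀ h₁ hB hD hBD.symm).resolve_left hNB
    obtain ⟨-, C₀, C₁, hC₀, hC₁, rfl, e₀, e₁⟩ :=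
      exists_layered_of_mem hN hA₀ hA₁ hC hB (by rw [add_comm, hBC]) hNC
    obtain ⟨-, D₀, D₁, hD₀, hD₁, rfl, e₀', e₁'⟩ :=
      exists_layered_of_mem hN hA₀ hA₁ hD hB (by rw [add_comm, hBD]) hND
    obtain ⟨rfl, rfl⟩ := hcompl C₀ C₁ D₀ D₁ B hC₀ hC₁ hD₀ hD₁ hB e₀ e₁ e₀' e₁'
    rfl

theorem zero_mem_multiset_sum {l : Multiset (Finset ℕ)} (hl : ∀ U ∈ l, 0 ∈ U) : 0 ∈ l.sum := by
  induction l using Multiset.induction_on with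
  | empty => simp
  | cons U r ih =>
    rw [Multiset.sum_cons]
    exact Finset.add_mem_add (hl U (Multiset.mem_cons_self _ _))
      (ih fun V hV => hl V (Multiset.mem_cons_of_mem hV))

theorem exists_cons_of_sum_eq_layered {N n : ℕ} (hN : 2 * n < N) (l : Multiset (Finset ℕ)) :
    ∀ {A₀ A₁ : Finset ℕ}, (∀ x ∈ A₀, x ≤ n) → (∀ x ∈ A₁, x ≤ n) → 0 ∈ A₁ →
      (∀ U ∈ l, 0 ∈ U) → l.sum = layered N A₀ A₁ →
      ∃ r B₀ B₁, l = layered N B₀ B₁ ::ₘ r ∧ 0 ∈ B₀ ∧ 0 ∈ B₁ ∧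
        B₀ + r.sum = A₀ ∧ B₁ + r.sum = A₁ := by
  induction l using Multiset.induction_on with
  | empty =>
    intro A₀ A₁ _ _ h₁ _ h
    have := h ▸ self_mem_layered (N := N) (A₀ := A₀) h₁
    simp only [Multiset.sum_zero, Finset.mem_zero] at this
    omega
  | cons U r ih =>
    intro A₀ A₁ hA₀ hA₁ h₁ hl h
    have hU := hl U (Multiset.mem_cons_self _ _)
    have hr : ∀ V ∈ r, 0 ∈ V := fun V hV => hl V (Multiset.mem_cons_of_mem hV)
    have hr' := zero_mem_multiset_sum hr
    rw [Multiset.sum_cons] at h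
    rcases mem_or_mem_of_add_eq_layered hN hA₀ h₁ hU hr' h with hNU | hNr
    · obtain ⟨-, B₀, B₁, hB₀, hB₁, rfl, e₀, e₁⟩ := exists_layered_of_mem hN hA₀ hA₁ hU hr' h hNU
      exact ⟨r, B₀, B₁, rfl, hB₀, hB₁, e₀, e₁⟩
    · obtain ⟨-, B₀, B₁, hB₀, hB₁, hre, e₀, e₁⟩ :=
        exists_layered_of_mem hN hA₀ hA₁ hr' hU (by rw [add_comm, h]) hNr
      obtain ⟨r', B₀', B₁', rfl, hB₀', hB₁', e₀', e₁'⟩ :=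
        ih (le_of_add_eq hA₀ hU e₀) (le_of_add_eq hA₁ hU e₁) hB₁ hr hre
      refine ⟨U ::ₘ r', B₀', B₁', Multiset.cons_swap _ _ _, hB₀', hB₁', ?_, ?_⟩
      · rw [Multiset.sum_cons, add_left_comm, e₀', add_comm, e₀]
      · rw [Multiset.sum_cons, add_left_comm, e₁', add_comm, e₁]

theorem mem_lengthSet_layered_iff {N n k : ℕ} {A₀ A₁ : Finset ℕ} (hN : 2 * n < N)
    (hA₀ : ∀ x ∈ A₀, x ≤ n) (hA₁ : ∀ x ∈ A₁, x ≤ n) (h₁ : 0 ∈ A₁) :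
    k ∈ LengthSet (layered N A₀ A₁) ↔ ∃ B₀ B₁ C : Finset ℕ, ∃ m ∈ LengthSet C,
      0 ∈ B₀ ∧ 0 ∈ B₁ ∧ 0 ∈ C ∧ B₀ + C = A₀ ∧ B₁ + C = A₁ ∧
        IsAtomP (layered N B₀ B₁) ∧ k = m + 1 := by
  constructor
  · rintro ⟨l, rfl, hl, hsum⟩
    obtain ⟨r, B₀, B₁, rfl, hB₀, hB₁, e₀, e₁⟩ :=
      exists_cons_of_sum_eq_layered hN l hA₀ hA₁ h₁ (fun U hU => (hl U hU).1) hsum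
    have hr : ∀ V ∈ r, IsAtomP V := fun V hV => hl V (Multiset.mem_cons_of_mem hV)
    exact ⟨B₀, B₁, r.sum, _, ⟨r, rfl, hr, rfl⟩, hB₀, hB₁,
      zero_mem_multiset_sum fun V hV => (hr V hV).1, e₀, e₁, hl _ (Multiset.mem_cons_self _ _),
      Multiset.card_cons _ _⟩
  · rintro ⟨B₀, B₁, C, m, ⟨r, rfl, hr, rfl⟩, -, -, -, e₀, e₁, hatom, rfl⟩
    refine ⟨layered N B₀ B₁ ::ₘ r, Multiset.card_cons _ _, ?_, ?_⟩
    · simpa using ⟨hatom, hr⟩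
    · rw [Multiset.sum_cons, layered_add, e₀, e₁]

/-- Adding a two-element set with a distant nonzero element shifts the length set of a relatively
cancellative set by one. -/
theorem relCancel_and_lengthSet_layered_self {N n : ℕ} {A : Finset ℕ} (hN : 2 * n < N)
    (hA : ∀ x ∈ A, x ≤ n) (h : 0 ∈ A) (hcan : RelCancel A) :
    RelCancel (layered N A A) ∧ LengthSet (layered N A A) = (· + 1) '' LengthSet A := by
  have hcompl : ∀ {B B' C : Finset ℕ}, 0 ∈ B → 0 ∈ B' → 0 ∈ C → B + C = A → B' + C = A →
      B = B' := fun hB hB' hC e e' =>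
    hcan _ _ _ hC hB hB' (by rw [add_comm, e]) (by rw [add_comm, e'])
  have hpair : IsAtomP (layered N {0} {0}) := by
    refine (isAtomP_layered_iff (n := 0) (by omega) (by simp) (by simp) (by simp) (by simp)).2 ?_
    intro B₀ B₁ C hB₀ _ hC e _
    refine Finset.eq_singleton_iff_unique_mem.2 ⟨hC, fun c hc => ?_⟩
    have := Finset.add_mem_add hB₀ hc
    rwa [e, zero_add, Finset.mem_singleton] at this
  refine ⟨relCancel_layered hN hA hA h ?_ ?_, ?_⟩
  · intro B₀ B₁ B₀' B₁' C hB₀ hB₁ hB₀' hB₁' hC e₀ e₁ e₀' e₁'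
    exact ⟨hcompl hB₀ hB₀' hC e₀ e₀', hcompl hB₁ hB₁' hC e₁ e₁'⟩
  · intro B₀ B₁ C D hB₀ _ hC hD e₀ _ e₀' _
    exact hcan B₀ C D hB₀ hC hD e₀.symm e₀'.symm
  · ext k
    rw [mem_lengthSet_layered_iff hN hA hA h]
    constructor
    · rintro ⟨B₀, B₁, C, m, hm, hB₀, hB₁, hC, e₀, e₁, hatom, rfl⟩
      obtain rfl := hcompl hB₀ hB₁ hC e₀ e₁
      have hB := (hatom.2.2 _ _ hpair.1 hB₀ (layered_self N B₀)).resolve_left hpair.2.1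
      rw [hB, singleton_zero_add_finset] at e₀
      exact ⟨m, e₀ ▸ hm, rfl⟩
    · rintro ⟨m, hm, rfl⟩
      exact ⟨{0}, {0}, A, m, hm, by simp, by simp, h, singleton_zero_add_finset A,
        singleton_zero_add_finset A, hpair, rfl⟩

/-- A common divisor `C` of two sets, together with the binary encodings of its complements in
both of them. -/
structure CommonDivisor where
  /-- The number of atoms in a factorization of `C`. -/
  length : ℕ
  /-- The elements of `C`. -/
  elements : List ℕ
  /-- The complement of `C` in the first set. -/
  compl₀ : ℕ
  /-- The complement of `C` in the second set. -/
  compl₁ : ℕ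

namespace CommonDivisor

/-- The binary encoding of a common divisor. -/
def mask (t : CommonDivisor) : ℕ := listMask t.elements

/-- A common divisor as a finite set. -/
def toFinset (t : CommonDivisor) : Finset ℕ := bitSet t.mask

/-- The sum of `u` and `v` is `t`. -/
def IsSum (u v t : CommonDivisor) : Prop := sumMask u.mask v.elements = t.mask

instance (u v t : CommonDivisor) : Decidable (IsSum u v t) := inferInstanceAs (Decidable (_ = _))

theorem isSum_iff {u v t : CommonDivisor} :
    IsSum u v t ↔ u.toFinset + v.toFinset = t.toFinset := by
  rw [IsSum, ← bitSet_injective.eq_iff, bitSet_sumMask]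
  rfl

end CommonDivisor

/-- The nonzero elements of the set `lowerLayer`. -/
def lowerElements : List ℕ :=
  [1, 3, 4, 5, 7, 8, 14, 15, 17, 18, 19, 21, 22, 42, 43, 45, 46, 47, 49, 50, 56, 57, 59, 60, 61,
    63, 64, 70, 71, 73, 74, 75, 77, 78, 98, 99, 101, 102, 103, 105, 106, 112, 113, 115, 116, 117,
    119, 120]

/-- The nonzero elements of the set `upperLayer`. -/
def upperElements : List ℕ :=
  [1, 2, 4, 5, 6, 8, 9, 14, 15, 16, 18, 19, 20, 22, 23, 28, 29, 30, 32, 33, 34, 36, 37, 56, 57,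
    58, 60, 61, 62, 64, 65, 70, 71, 72, 74, 75, 76, 78, 79, 84, 85, 86, 88, 89, 90, 92, 93, 112,
    113, 114, 116, 117, 118, 120, 121, 126, 127, 128, 130, 131, 132, 134, 135]

/-- The binary encoding of `lowerLayer`. -/
def lowerMask : ℕ := 2300327900635426949856665940345668027

/-- The binary encoding of `upperLayer`. -/
def upperMask : ℕ := 75462220432048782787590479227979634164599

/-- The lower layer of a set with length set `{3, 4, 5}`: it is `P + 14 • P` for
`P = {0, 1, 3, 4, 5, 7, 8}`. -/
def lowerLayer : Finset ℕ := bitSet lowerMask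

/-- The upper layer of a set with length set `{3, 4, 5}`: it is `Q + 14 • Q` for
`Q = {0, 1, 2, 4, 5, 6, 8, 9}`. -/
def upperLayer : Finset ℕ := bitSet upperMask

/-- The common divisors of `lowerLayer` and `upperLayer`. -/
def commonDivisors : List CommonDivisor :=
  [⟨0, [0],
    2300327900635426949856665940345668027, 75462220432048782787590479227979634164599⟩,
   ⟨1, [0, 14, 56],
    31923462493406495163, 1047248682662255482749815⟩,
   ⟨1, [0, 14],
    140392303975308329678253286490555, 4605567313521439355189212499500974967⟩,
   ⟨1, [0, 56],
    31923462493413753275, 1047248682662493584999287⟩,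
   ⟨2, [0, 14, 56, 70],
    1948334604419515, 63915085911656612727⟩,
   ⟨1, [0, 1, 4],
    129815344279651633739089500019507225, 4338864985382737229049734431371997003827⟩,
   ⟨2, [0, 1, 4, 14, 15, 18, 56, 57, 60],
    1801549802110976025, 60213847593883911634995⟩,
   ⟨2, [0, 1, 4, 14, 15, 18],
    7922816251428235309156506009625, 264807139785336422902649196701859891⟩,
   ⟨2, [0, 1, 4, 56, 57, 60],
    1801549802111385625, 60213847593897601843251⟩,
   ⟨3, [0, 1, 4, 14, 15, 18, 56, 57, 60, 70, 71, 74],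
    109951162777625, 3674937295935160371⟩,
   ⟨1, [0, 1],
    794469906991467998483227740119384217, 26118265696323535868985656282964766277939⟩,
   ⟨2, [0, 1, 14, 15, 56, 57],
    11025484788919173273, 362463749241614919057715⟩,
   ⟨2, [0, 1, 14, 15],
    48487635458740800092037816778905, 1594035135570554545708103987989627187⟩,
   ⟨2, [0, 1, 56, 57],
    11025484788921680025, 362463749241697328742707⟩,
   ⟨3, [0, 1, 14, 15, 56, 57, 70, 71],
    672901116199065, 22121681369648906547⟩,
   ⟨1, [0, 4],
    140200571822023764438216660021067803, 4679168121491187207798733210303134023735⟩,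
   ⟨2, [0, 4, 14, 18, 56, 60],
    1945673786279854107, 64936502307129708625975⟩,
   ⟨2, [0, 4, 14, 18],
    8556641551542494133889026490395, 285576327219480456071484427815731255⟩,
   ⟨2, [0, 4, 56, 60],
    1945673786280296475, 64936502307144472576055⟩,
   ⟨3, [0, 4, 14, 18, 56, 60, 70, 74],
    118747255799835, 3963167672086937655⟩,
   ⟨2, [0, 1, 4, 5],
    46733523940674588146072220007022601, 1616439896515137399057744199922900844563⟩,
   ⟨3, [0, 1, 4, 5, 14, 15, 18, 19, 56, 57, 60, 61],
    648557928759951369, 22432609887917535707155⟩,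
   ⟨3, [0, 1, 4, 5, 14, 15, 18, 19],
    2852213850514164711296342163465, 98653640312184157551967347790888979⟩,
   ⟨3, [0, 1, 4, 5, 56, 57, 60, 61],
    648557928760098825, 22432609887922635980819⟩,
   ⟨4, [0, 1, 4, 5, 14, 15, 18, 19, 56, 57, 60, 61, 70, 71, 74, 75],
    39582418599945, 1369094286720942099⟩]

theorem listMask_lowerElements : listMask (0 :: lowerElements) = lowerMask := by decide +kernel

theorem listMask_upperElements : listMask (0 :: upperElements) = upperMask := by decide +kernel

theorem search_lowerLayer : search lowerMask 1 upperMask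
    (fun b c => commonDivisors.any fun t => Nat.beq t.mask c && Nat.beq t.compl₀ b)
    lowerElements (pack 1) (pack 1) (pack 1) = true := by
  decide +kernel

theorem sumMask_compl : ∀ t ∈ commonDivisors,
    sumMask t.compl₀ t.elements = lowerMask ∧ sumMask t.compl₁ t.elements = upperMask := by
  decide +kernel

theorem zero_mem_elements_and_compl : ∀ t ∈ commonDivisors,
    0 ∈ t.elements ∧ t.compl₀ % 2 = 1 ∧ t.compl₁ % 2 = 1 := by
  decide +kernel

theorem unique_upper_compl : ∀ t ∈ commonDivisors, ∀ j ∈ 0 :: upperElements,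
    if isSubmask (1 <<< j) t.compl₁ then sumMask (t.compl₁ ^^^ 1 <<< j) t.elements ≠ upperMask
    else isSubmask (t.mask <<< j) upperMask = false := by
  decide +kernel

theorem nodup_mask : (commonDivisors.map CommonDivisor.mask).Nodup := by
  decide +kernel

theorem nodup_compl₀ : (commonDivisors.map CommonDivisor.compl₀).Nodup := by
  decide +kernel

theorem length_add_of_isSum : ∀ u ∈ commonDivisors, ∀ v ∈ commonDivisors, ∀ t ∈ commonDivisors,
    u.IsSum v t → t.length = u.length + v.length := by
  decide +kernel

theorem length_eq_zero_iff : ∀ t ∈ commonDivisors, t.length = 0 ↔ t.mask = 1 := by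
  decide +kernel

theorem length_le_one_or_exists_isSum : ∀ t ∈ commonDivisors, t.length ≤ 1 ∨
    ∃ u ∈ commonDivisors, ∃ v ∈ commonDivisors, u.mask ≠ 1 ∧ v.mask ≠ 1 ∧ u.IsSum v t := by
  decide +kernel

theorem length_mem_or_exists_isSum : ∀ t ∈ commonDivisors, t.length ∈ [2, 3, 4] ∨
    ∃ u ∈ commonDivisors, ∃ v ∈ commonDivisors, u.mask ≠ 1 ∧ u.IsSum t v := by
  decide +kernel

theorem exists_length_eq : ∀ m ∈ [2, 3, 4], ∃ t ∈ commonDivisors, t.length = m ∧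
    ∀ u ∈ commonDivisors, ∀ v ∈ commonDivisors, u.IsSum t v → u.mask = 1 := by
  decide +kernel

/-- If removing any element of `co` spoils the sumset with `C`, and no element outside `co` can be
added, then `co` is the only complement of `C`. -/
theorem eq_of_uniquely_covered {A C co : ℕ} {l : List ℕ} {els : List ℕ} {B : Finset ℕ}
    (hA : bitSet A = els.toFinset) (hC : C = listMask l) (h0 : 0 ∈ bitSet C)
    (hco : sumMask co l = A)
    (h : ∀ j ∈ els, if isSubmask (1 <<< j) co then sumMask (co ^^^ 1 <<< j) l ≠ A
      else isSubmask (C <<< j) A = false)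
    (hB : B + bitSet C = bitSet A) : B = bitSet co := by
  subst hC
  have hels : ∀ j, j ∈ els ↔ j ∈ bitSet A := fun j => by rw [hA, List.mem_toFinset]
  have hsub : ∀ {D : Finset ℕ}, D + bitSet (listMask l) = bitSet A → D ⊆ bitSet A := by
    intro D hD d hd
    rw [← hD]
    exact Finset.mem_add.2 ⟨d, hd, 0, h0, rfl⟩
  have hco' : bitSet co + bitSet (listMask l) = bitSet A := by rw [← bitSet_sumMask, hco]
  have hBco : B ⊆ bitSet co := by
    intro b hb
    by_contra hbco
    have := h b ((hels b).2 (hsub hB hb))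
    rw [if_neg fun h => hbco (isSubmask_one_shiftLeft.1 h)] at this
    refine Bool.eq_false_iff.1 this (isSubmask_of_subset ?_)
    rw [bitSet_shiftLeft, ← hB]
    exact Finset.add_subset_add_right (Finset.singleton_subset_iff.2 hb)
  refine hBco.antisymm fun b hb => ?_
  by_contra hbB
  have hne := h b ((hels b).2 (hsub hco' hb))
  rw [if_pos (isSubmask_one_shiftLeft.2 hb)] at hne
  refine hne (bitSet_injective ?_)
  rw [bitSet_sumMask]
  have herase : bitSet (co ^^^ 1 <<< b) = (bitSet co).erase b := by
    ext i
    rw [mem_bitSet] at hb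
    by_cases hi : i = b
    · subst hi
      simp [Nat.one_shiftLeft, Nat.testBit_xor, hb]
    · simp [Nat.one_shiftLeft, Nat.testBit_xor, hi, Ne.symm hi]
  rw [herase]
  refine Finset.Subset.antisymm ?_ ?_
  · rw [← hco']
    exact Finset.add_subset_add_right (Finset.erase_subset _ _)
  · rw [← hB]
    refine Finset.add_subset_add_right fun x hx => Finset.mem_erase.2 ⟨?_, hBco hx⟩
    rintro rfl
    exact hbB hx

namespace CommonDivisor

variable {t : CommonDivisor}

theorem zero_mem_toFinset (ht : t ∈ commonDivisors) : 0 ∈ t.toFinset := by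
  rw [toFinset, mask, bitSet_listMask, List.mem_toFinset]
  exact (zero_mem_elements_and_compl t ht).1

theorem zero_mem_compl₀ (ht : t ∈ commonDivisors) : 0 ∈ bitSet t.compl₀ :=
  zero_mem_bitSet.2 (zero_mem_elements_and_compl t ht).2.1

theorem zero_mem_compl₁ (ht : t ∈ commonDivisors) : 0 ∈ bitSet t.compl₁ :=
  zero_mem_bitSet.2 (zero_mem_elements_and_compl t ht).2.2

theorem compl₀_add_toFinset (ht : t ∈ commonDivisors) :
    bitSet t.compl₀ + t.toFinset = lowerLayer := by
  rw [toFinset, mask, ← bitSet_sumMask, (sumMask_compl t ht).1, lowerLayer]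

theorem compl₁_add_toFinset (ht : t ∈ commonDivisors) :
    bitSet t.compl₁ + t.toFinset = upperLayer := by
  rw [toFinset, mask, ← bitSet_sumMask, (sumMask_compl t ht).2, upperLayer]

theorem toFinset_eq_singleton_iff : t.toFinset = {0} ↔ t.mask = 1 := by
  rw [← bitSet_one, toFinset, bitSet_injective.eq_iff]

theorem eq_of_toFinset_eq {u : CommonDivisor} (ht : t ∈ commonDivisors) (hu : u ∈ commonDivisors)
    (h : t.toFinset = u.toFinset) : t = u :=
  List.inj_on_of_nodup_map nodup_mask ht hu (bitSet_injective h)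

end CommonDivisor

section Layers

open CommonDivisor

theorem exists_commonDivisor {B₀ B₁ C : Finset ℕ} (hB₀ : 0 ∈ B₀) (hB₁ : 0 ∈ B₁) (hC : 0 ∈ C)
    (e₀ : B₀ + C = lowerLayer) (e₁ : B₁ + C = upperLayer) :
    ∃ t ∈ commonDivisors, t.toFinset = C ∧ bitSet t.compl₀ = B₀ ∧ bitSet t.compl₁ = B₁ := by
  have hCle : C ⊆ upperLayer := by
    intro c hc
    rw [← e₁]
    exact Finset.mem_add.2 ⟨0, hB₁, c, hc, zero_add c⟩
  obtain ⟨b, c, rfl, rfl, hbc⟩ := exists_leaf_of_search_listMask (js := lowerElements)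
    (lo := 1) (hi := upperMask) (B := B₀) (C := C) (by decide +kernel)
    (by rw [listMask_lowerElements]; exact search_lowerLayer) hB₀ hC
    (by rw [listMask_lowerElements]; exact e₀) (by simpa using hC) hCle
  simp only [List.any_eq_true, Bool.and_eq_true, Nat.beq_eq] at hbc
  obtain ⟨t, ht, rfl, rfl⟩ := hbc
  refine ⟨t, ht, rfl, rfl, (eq_of_uniquely_covered ?_ rfl (zero_mem_toFinset ht)
    (sumMask_compl t ht).2 (unique_upper_compl t ht) e₁).symm⟩
  rw [← listMask_upperElements, bitSet_listMask]

theorem exists_commonDivisor_of_add_eq {t : CommonDivisor} {X Y : Finset ℕ}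
    (ht : t ∈ commonDivisors) (hX : 0 ∈ X) (hY : 0 ∈ Y) (h : X + Y = t.toFinset) :
    ∃ u ∈ commonDivisors, u.toFinset = X := by
  have e₀ := compl₀_add_toFinset ht
  have e₁ := compl₁_add_toFinset ht
  rw [← h, add_comm X, ← add_assoc] at e₀ e₁
  obtain ⟨u, hu, hu', -, -⟩ := exists_commonDivisor
    (Finset.add_mem_add (zero_mem_compl₀ ht) hY) (Finset.add_mem_add (zero_mem_compl₁ ht) hY)
    hX e₀ e₁
  exact ⟨u, hu, hu'⟩

theorem card_eq_length_of_sum_eq (l : Multiset (Finset ℕ)) (hl : ∀ U ∈ l, IsAtomP U) :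
    ∀ t ∈ commonDivisors, l.sum = t.toFinset → Multiset.card l = t.length := by
  induction l using Multiset.induction_on with
  | empty =>
    intro t ht h
    rw [Multiset.card_zero, eq_comm, length_eq_zero_iff t ht, ← toFinset_eq_singleton_iff, ← h,
      Multiset.sum_zero, Finset.singleton_zero]
  | cons U r ih =>
    intro t ht h
    have hU := hl U (Multiset.mem_cons_self _ _)
    have hr : ∀ V ∈ r, IsAtomP V := fun V hV => hl V (Multiset.mem_cons_of_mem hV)
    have hr0 := zero_mem_multiset_sum fun V hV => (hr V hV).1
    rw [Multiset.sum_cons] at h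
    obtain ⟨u, hu, rfl⟩ := exists_commonDivisor_of_add_eq ht hU.1 hr0 h
    obtain ⟨v, hv, hv'⟩ := exists_commonDivisor_of_add_eq ht hr0 hU.1 (by rw [add_comm, h])
    have hlen := length_add_of_isSum u hu v hv t ht (isSum_iff.2 (by rw [hv', h]))
    have hu1 : u.length = 1 := by
      have hne : u.length ≠ 0 := fun h0 =>
        hU.2.1 (toFinset_eq_singleton_iff.2 ((length_eq_zero_iff u hu).1 h0))
      rcases length_le_one_or_exists_isSum u hu with h1 | ⟨x, hx, y, hy, hx1, hy1, hxy⟩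
      · omega
      · rcases hU.2.2 _ _ (zero_mem_toFinset hx) (zero_mem_toFinset hy) (isSum_iff.1 hxy).symm
          with h' | h'
        · exact absurd (toFinset_eq_singleton_iff.1 h') hx1
        · exact absurd (toFinset_eq_singleton_iff.1 h') hy1
    rw [Multiset.card_cons, ih hr v hv hv'.symm, hlen, hu1, add_comm]

theorem isAtomP_of_length_eq_one {t : CommonDivisor} (ht : t ∈ commonDivisors)
    (h : t.length = 1) : IsAtomP t.toFinset := by
  refine ⟨zero_mem_toFinset ht, fun h' => ?_, fun X Y hX hY hXY => ?_⟩
  · have := (length_eq_zero_iff t ht).2 (toFinset_eq_singleton_iff.1 h')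
    omega
  · obtain ⟨u, hu, rfl⟩ := exists_commonDivisor_of_add_eq ht hX hY hXY.symm
    obtain ⟨v, hv, rfl⟩ := exists_commonDivisor_of_add_eq ht hY hX (by rw [add_comm, hXY])
    have hlen := length_add_of_isSum u hu v hv t ht (isSum_iff.2 hXY.symm)
    simp only [toFinset_eq_singleton_iff, ← length_eq_zero_iff u hu, ← length_eq_zero_iff v hv]
    omega

theorem length_mem_lengthSet (n : ℕ) :
    ∀ t ∈ commonDivisors, t.length = n → n ∈ LengthSet t.toFinset := by
  induction n using Nat.strong_induction_on with
  | _ n ih =>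
    rintro t ht rfl
    rcases length_le_one_or_exists_isSum t ht with h | ⟨u, hu, v, hv, hu1, hv1, huv⟩
    · rcases Nat.le_one_iff_eq_zero_or_eq_one.1 h with h | h
      · refine ⟨0, h.symm, by simp, ?_⟩
        rw [Multiset.sum_zero, ← Finset.singleton_zero, eq_comm, toFinset_eq_singleton_iff,
          ← length_eq_zero_iff t ht, h]
      · exact ⟨{t.toFinset}, by simp [h], by simpa using isAtomP_of_length_eq_one ht h, by simp⟩
    · have hlen := length_add_of_isSum u hu v hv t ht huv
      have hu0 := mt (length_eq_zero_iff u hu).1 hu1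
      have hv0 := mt (length_eq_zero_iff v hv).1 hv1
      obtain ⟨l, hl, hl', hls⟩ := ih u.length (by omega) u hu rfl
      obtain ⟨r, hr, hr', hrs⟩ := ih v.length (by omega) v hv rfl
      refine ⟨l + r, by rw [Multiset.card_add, hl, hr, hlen], fun U hU => ?_, ?_⟩
      · exact (Multiset.mem_add.1 hU).elim (hl' U) (hr' U)
      · rw [Multiset.sum_add, hls, hrs, isSum_iff.1 huv]

theorem lengthSet_toFinset {t : CommonDivisor} (ht : t ∈ commonDivisors) :
    LengthSet t.toFinset = {t.length} := by
  ext n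
  constructor
  · rintro ⟨l, rfl, hl, hsum⟩
    exact card_eq_length_of_sum_eq l hl t ht hsum
  · rintro rfl
    exact length_mem_lengthSet _ t ht rfl

theorem le_of_mem_lowerLayer : ∀ x ∈ lowerLayer, x ≤ 135 := by
  intro x hx
  rw [lowerLayer, ← listMask_lowerElements, bitSet_listMask, List.mem_toFinset] at hx
  revert x
  decide +kernel

theorem le_of_mem_upperLayer : ∀ x ∈ upperLayer, x ≤ 135 := by
  intro x hx
  rw [upperLayer, ← listMask_upperElements, bitSet_listMask, List.mem_toFinset] at hx
  revert x
  decide +kernel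

theorem zero_mem_upperLayer : 0 ∈ upperLayer := zero_mem_bitSet.2 rfl

theorem zero_mem_lowerLayer : 0 ∈ lowerLayer := zero_mem_bitSet.2 rfl

theorem isAtomP_layered_compl_iff {t : CommonDivisor} (ht : t ∈ commonDivisors) :
    IsAtomP (layered 271 (bitSet t.compl₀) (bitSet t.compl₁)) ↔
      ∀ u ∈ commonDivisors, ∀ v ∈ commonDivisors, u.IsSum t v → u.mask = 1 := by
  have h0 := zero_mem_toFinset ht
  have e₀ := compl₀_add_toFinset ht
  have e₁ := compl₁_add_toFinset ht
  rw [isAtomP_layered_iff (by norm_num) (le_of_add_eq le_of_mem_lowerLayer h0 e₀)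
    (le_of_add_eq le_of_mem_upperLayer h0 e₁) (zero_mem_compl₀ ht) (zero_mem_compl₁ ht)]
  constructor
  · intro H u hu v hv huv
    have huv' := isSum_iff.1 huv
    have hv₀ := Finset.add_mem_add (zero_mem_compl₀ hv) (zero_mem_toFinset hu)
    have hv₁ := Finset.add_mem_add (zero_mem_compl₁ hv) (zero_mem_toFinset hu)
    obtain ⟨t', ht', htt', hc₀, hc₁⟩ := exists_commonDivisor hv₀ hv₁ h0
      (by rw [add_assoc, huv', compl₀_add_toFinset hv])
      (by rw [add_assoc, huv', compl₁_add_toFinset hv])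
    obtain rfl := eq_of_toFinset_eq ht' ht htt'
    exact toFinset_eq_singleton_iff.1 (H _ _ _ (zero_mem_compl₀ hv) (zero_mem_compl₁ hv)
      (zero_mem_toFinset hu) hc₀.symm hc₁.symm)
  · intro H B₀ B₁ C hB₀ hB₁ hC f₀ f₁
    rw [← f₀, add_assoc] at e₀
    rw [← f₁, add_assoc] at e₁
    obtain ⟨v, hv, hvs, -, -⟩ :=
      exists_commonDivisor hB₀ hB₁ (Finset.add_mem_add hC h0) e₀ e₁
    obtain ⟨u, hu, rfl⟩ := exists_commonDivisor_of_add_eq hv hC h0 hvs.symm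
    exact toFinset_eq_singleton_iff.2 (H u hu v hv (isSum_iff.2 hvs.symm))

theorem relCancel_layered_lowerLayer_upperLayer :
    RelCancel (layered 271 lowerLayer upperLayer) := by
  refine relCancel_layered (by norm_num) le_of_mem_lowerLayer le_of_mem_upperLayer
    zero_mem_upperLayer ?_ ?_
  · intro B₀ B₁ B₀' B₁' C hB₀ hB₁ hB₀' hB₁' hC e₀ e₁ e₀' e₁'
    obtain ⟨t, ht, htC, rfl, rfl⟩ := exists_commonDivisor hB₀ hB₁ hC e₀ e₁
    obtain ⟨u, hu, huC, rfl, rfl⟩ := exists_commonDivisor hB₀' hB₁' hC e₀' e₁'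
    obtain rfl := eq_of_toFinset_eq ht hu (htC.trans huC.symm)
    exact ⟨rfl, rfl⟩
  · intro B₀ B₁ C D hB₀ hB₁ hC hD e₀ e₁ e₀' e₁'
    obtain ⟨t, ht, rfl, htB, -⟩ := exists_commonDivisor hB₀ hB₁ hC e₀ e₁
    obtain ⟨u, hu, rfl, huB, -⟩ := exists_commonDivisor hB₀ hB₁ hD e₀' e₁'
    rw [List.inj_on_of_nodup_map nodup_compl₀ ht hu (bitSet_injective (htB.trans huB.symm))]

theorem lengthSet_layered_lowerLayer_upperLayer :
    LengthSet (layered 271 lowerLayer upperLayer) = {3, 4, 5} := by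
  ext k
  rw [mem_lengthSet_layered_iff (by norm_num) le_of_mem_lowerLayer le_of_mem_upperLayer
    zero_mem_upperLayer]
  constructor
  · rintro ⟨B₀, B₁, C, m, hm, hB₀, hB₁, hC, e₀, e₁, hatom, rfl⟩
    obtain ⟨t, ht, rfl, rfl, rfl⟩ := exists_commonDivisor hB₀ hB₁ hC e₀ e₁
    rw [lengthSet_toFinset ht] at hm
    obtain rfl := hm
    rcases length_mem_or_exists_isSum t ht with h | ⟨u, hu, v, hv, hu1, huv⟩
    · simp only [List.mem_cons, List.not_mem_nil, or_false] at h
      simp only [Set.mem_insert_iff, Set.mem_singleton_iff]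
      omega
    · exact absurd ((isAtomP_layered_compl_iff ht).1 hatom u hu v hv huv) hu1
  · intro hk
    have hk' : k - 1 ∈ [2, 3, 4] ∧ k = k - 1 + 1 := by
      rcases hk with rfl | rfl | rfl <;> simp
    obtain ⟨t, ht, htk, hatom⟩ := exists_length_eq _ hk'.1
    refine ⟨bitSet t.compl₀, bitSet t.compl₁, t.toFinset, k - 1, ?_, zero_mem_compl₀ ht,
      zero_mem_compl₁ ht, zero_mem_toFinset ht, compl₀_add_toFinset ht, compl₁_add_toFinset ht,
      (isAtomP_layered_compl_iff ht).2 hatom, hk'.2⟩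
    rw [lengthSet_toFinset ht, ← htk]
    exact Set.mem_singleton _

end Layers

theorem exists_relCancel_lengthSet_eq (j : ℕ) :
    ∃ A : Finset ℕ, 0 ∈ A ∧ RelCancel A ∧ LengthSet A = {j + 3, j + 4, j + 5} := by
  induction j with
  | zero =>
    exact ⟨_, zero_mem_layered zero_mem_lowerLayer, relCancel_layered_lowerLayer_upperLayer,
      lengthSet_layered_lowerLayer_upperLayer⟩
  | succ j ih =>
    obtain ⟨A, hA, hcan, hL⟩ := ih
    obtain ⟨hcan', hL'⟩ := relCancel_and_lengthSet_layered_self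
      (N := 2 * A.sup id + 1) (Nat.lt_succ_self _) (fun x hx => Finset.le_sup (f := id) hx) hA hcan
    refine ⟨_, zero_mem_layered hA, hcan', ?_⟩
    rw [hL', hL, Set.image_insert_eq, Set.image_pair]

theorem isAtomP_of_forall_powerset {X : Finset ℕ} (h0 : 0 ∈ X) (hX : X ≠ {0})
    (h : ∀ A ∈ X.powerset, ∀ B ∈ X.powerset, X = A + B → A = {0} ∨ B = {0}) : IsAtomP X := by
  refine ⟨h0, hX, fun A B hA hB hAB => h A ?_ B ?_ hAB⟩
  · rw [Finset.mem_powerset, hAB]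
    exact Finset.subset_add_left A hB
  · rw [Finset.mem_powerset, hAB]
    exact Finset.subset_add_right B hA

theorem exists_card_le_of_forall_isAtomP (l : Multiset (Finset ℕ)) (hl : ∀ U ∈ l, IsAtomP U) :
    ∃ x ∈ l.sum, Multiset.card l ≤ x := by
  induction l using Multiset.induction_on with
  | empty => exact ⟨0, by simp, by simp⟩
  | cons U r ih =>
    obtain ⟨x, hx, hrx⟩ := ih fun V hV => hl V (Multiset.mem_cons_of_mem hV)
    have hU := hl U (Multiset.mem_cons_self _ _)
    obtain ⟨y, hy, hy0⟩ : ∃ y ∈ U, y ≠ 0 := by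
      by_contra! h
      exact hU.2.1 (Finset.eq_singleton_iff_unique_mem.2 ⟨hU.1, h⟩)
    refine ⟨y + x, by rw [Multiset.sum_cons]; exact Finset.add_mem_add hy hx, ?_⟩
    rw [Multiset.card_cons]
    omega

theorem lengthSet_range_five : LengthSet (Finset.range 5) = {2, 3, 4} := by
  have a₁ : IsAtomP {0, 1} := isAtomP_of_forall_powerset (by decide) (by decide) (by decide)
  have a₂ : IsAtomP {0, 2} := isAtomP_of_forall_powerset (by decide) (by decide) (by decide)
  have a₃ : IsAtomP {0, 1, 3} := isAtomP_of_forall_powerset (by decide) (by decide) (by decide)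
  ext k
  constructor
  · rintro ⟨l, rfl, hl, hsum⟩
    obtain ⟨x, hx, hlx⟩ := exists_card_le_of_forall_isAtomP l hl
    rw [hsum, Finset.mem_range] at hx
    have h0 : Multiset.card l ≠ 0 := by
      intro h
      rw [Multiset.card_eq_zero.1 h, Multiset.sum_zero] at hsum
      exact absurd hsum (by decide)
    have h1 : Multiset.card l ≠ 1 := by
      intro h
      obtain ⟨U, rfl⟩ := Multiset.card_eq_one.1 h
      rw [Multiset.sum_singleton] at hsum
      have hU := hl U (Multiset.mem_singleton_self U)
      rw [hsum] at hU
      rcases hU.2.2 {0, 1} {0, 1, 2, 3} (by decide) (by decide) (by decide) with h | h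
      · exact absurd h (by decide)
      · exact absurd h (by decide)
    simp only [Set.mem_insert_iff, Set.mem_singleton_iff]
    omega
  · rintro (rfl | rfl | rfl)
    · exact ⟨{{0, 1}, {0, 1, 3}}, rfl, by simp [a₁, a₃], by decide⟩
    · exact ⟨{{0, 1}, {0, 1}, {0, 2}}, rfl, by simp [a₁, a₂], by decide⟩
    · exact ⟨{{0, 1}, {0, 1}, {0, 1}, {0, 1}}, rfl, by simp [a₁], by decide⟩

theorem interval_lengthSet (k : ℕ) (hk : 2 ≤ k) :
    ∃ A : Finset ℕ, 0 ∈ A ∧ LengthSet A = {k, k + 1, k + 2} := by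
  obtain rfl | hk := hk.eq_or_lt
  · exact ⟨Finset.range 5, by simp, lengthSet_range_five⟩
  · obtain ⟨j, rfl⟩ := Nat.exists_eq_add_of_lt hk
    obtain ⟨A, hA, -, hL⟩ := exists_relCancel_lengthSet_eq j
    refine ⟨A, hA, hL.trans ?_⟩
    simp only [add_comm, add_left_comm, Nat.reduceAdd]
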